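/- There exists a constant C > 0 such that for all x ∈ ℝ³, ∫_{ℝ³} [e^{−|x−y|}/|x−y|²] · [e^{−|y|}/(|y|^{1.5+ε}+1)] dy ≤ C e^{−|x|}/(|x|^{1.5}+1), for any fixed ε > 0 (with C depending only on ε). -/

import Mathlib

set_option autoImplicit false
open MeasureTheory

noncomputable def phi (δ s : ℝ) : ℝ := |s| ^ (-1 + δ) * (max 1 |s|) ^ (-2 * δ)

lemma phi_nonneg (δ s : ℝ) : 0 ≤ phi δ s := by unfold phi; positivity

lemma phi_integrable (δ : ℝ) (hδ : 0 < δ) : Integrable (phi δ) := by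
  have h1 : IntegrableOn (phi δ) (Set.Ioi 0) := by
    rw [← Set.Ioc_union_Ioi_eq_Ioi (zero_le_one (α := ℝ))]
    apply IntegrableOn.union
    · have : IntegrableOn (fun s : ℝ => s ^ (-1 + δ)) (Set.Ioc 0 1) := by
        rw [← intervalIntegrable_iff_integrableOn_Ioc_of_le zero_le_one]
        exact intervalIntegral.intervalIntegrable_rpow' (by linarith)
      refine this.congr_fun ?_ measurableSet_Ioc
      intro s hs
      simp [phi, abs_of_pos hs.1, max_eq_left hs.2]
    · have : IntegrableOn (fun s : ℝ => s ^ (-1 - δ)) (Set.Ioi 1) :=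
        integrableOn_Ioi_rpow_of_lt (by linarith) one_pos
      refine this.congr_fun ?_ measurableSet_Ioi
      intro s hs
      have hs' : (1:ℝ) < s := hs
      have h0 : 0 < s := by linarith
      simp only [phi, abs_of_pos h0, max_eq_right hs'.le]
      rw [← Real.rpow_add h0]
      congr 1; ring
  have h2 : IntegrableOn (phi δ) (Set.Iio 0) := by
    have := h1.comp_neg
    simp only [Set.neg_Ioi, neg_zero] at this
    refine this.congr_fun ?_ measurableSet_Iio
    intro s hs
    simp [phi]
  have h3 : IntegrableOn (phi δ) (Set.Iic 0 ∪ Set.Ioi 0) :=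
    ((integrableOn_Iic_iff_integrableOn_Iio).2 h2).union h1
  rwa [Set.Iic_union_Ioi, integrableOn_univ] at h3

lemma pointwise (d : ℝ) (hd : 0 < d) (hd2 : d ≤ 1/2) (v : EuclideanSpace ℝ (Fin 3))
    (hv : ∀ i, v i ≠ 0) :
    ‖v‖ ^ (-(2 + d)) * Real.exp (-(‖v‖ - v 0)) ≤ ∏ i, phi (d/4) (v i) := by
  obtain ⟨δ, rfl⟩ : ∃ δ, d = 4 * δ := ⟨d/4, by ring⟩
  have hδ : 0 < δ := by linarith
  have e1 : 4 * δ / 4 = δ := by ring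
  rw [e1]
  have hle : ∀ i, |v i| ≤ ‖v‖ := fun i => by
    simpa using PiLp.norm_apply_le v i
  have hp : ∀ i, 0 < |v i| := fun i => abs_pos.2 (hv i)
  have hsq : ‖v‖ ^ 2 = v 0 ^ 2 + v 1 ^ 2 + v 2 ^ 2 := by
    rw [EuclideanSpace.norm_sq_eq, Fin.sum_univ_three]; simp
  set N := ‖v‖ with hN
  have hN0 : 0 < N := (hp 0).trans_le (hle 0)
  have hmono : ∀ i, N ^ (-1 + δ) ≤ |v i| ^ (-1 + δ) := fun i =>
    Real.rpow_le_rpow_of_nonpos (hp i) (hle i) (by linarith)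
  have hv0 := abs_le.1 (hle 0)
  rw [Fin.prod_univ_three]
  by_cases hN1 : 1 ≤ N
  · have hm : ∀ i, N ^ (-2 * δ) ≤ (max 1 |v i|) ^ (-2 * δ) := fun i =>
      Real.rpow_le_rpow_of_nonpos (by positivity) (max_le hN1 (hle i)) (by linarith)
    have hw : |v 1| * |v 2| / N ≤ N - v 0 := by
      rw [div_le_iff₀ hN0]
      nlinarith [sq_nonneg (|v 1| - |v 2|), sq_abs (v 1), sq_abs (v 2), sq_nonneg (N - v 0)]
    have hwpos : 0 < |v 1| * |v 2| / N := div_pos (mul_pos (hp 1) (hp 2)) hN0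
    set w := |v 1| * |v 2| / N with hwdef
    have hexp : Real.exp (-(N - v 0)) ≤ w ^ (-1 + δ) := by
      have h1 : Real.exp (-(N - v 0)) ≤ Real.exp (-w) := Real.exp_le_exp.2 (by linarith)
      refine h1.trans ?_
      rw [show (-1 + δ) = -(1 - δ) by ring, Real.rpow_neg hwpos.le, Real.exp_neg]
      apply inv_anti₀ (by positivity)
      rcases le_total w 1 with h | h
      · exact (Real.rpow_le_one hwpos.le h (by linarith)).trans (Real.one_le_exp hwpos.le)
      · calc w ^ (1 - δ) ≤ w ^ (1:ℝ) := Real.rpow_le_rpow_of_exponent_le h (by linarith)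
          _ ≤ _ := by rw [Real.rpow_one]; linarith [Real.add_one_le_exp w]
    have hweq : w ^ (-1 + δ) = |v 1| ^ (-1 + δ) * |v 2| ^ (-1 + δ) * N ^ (1 - δ) := by
      rw [hwdef, Real.div_rpow (by positivity) hN0.le, Real.mul_rpow (abs_nonneg _) (abs_nonneg _),
        div_eq_mul_inv, ← Real.rpow_neg hN0.le]
      congr 2; ring
    calc N ^ (-(2 + 4 * δ)) * Real.exp (-(N - v 0))
        ≤ N ^ (-(2 + 4 * δ)) * (|v 1| ^ (-1 + δ) * |v 2| ^ (-1 + δ) * N ^ (1 - δ)) := by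
          rw [← hweq]; gcongr
      _ = (N ^ (-1 + δ) * N ^ (-2 * δ)) * (|v 1| ^ (-1 + δ) * N ^ (-2 * δ)) *
            (|v 2| ^ (-1 + δ) * N ^ (-2 * δ)) := by
          have : N ^ (-(2 + 4 * δ)) * N ^ (1 - δ) =
            N ^ (-1 + δ) * N ^ (-2 * δ) * N ^ (-2 * δ) * N ^ (-2 * δ) := by
            simp only [← Real.rpow_add hN0]; congr 1; ring
          linear_combination (|v 1| ^ (-1 + δ) * |v 2| ^ (-1 + δ)) * this
      _ ≤ _ := by
          unfold phi
          gcongr (?_ * ?_) * (_ * ?_) * (_ * ?_)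
          · exact hmono 0
          · exact hm 0
          · exact hm 1
          · exact hm 2
  · push Not at hN1
    have hph : ∀ i, phi δ (v i) = |v i| ^ (-1 + δ) := fun i => by
      simp [phi, max_eq_left ((hle i).trans hN1.le)]
    simp only [hph]
    have he : Real.exp (-(N - v 0)) ≤ 1 := Real.exp_le_one_iff.2 (by linarith)
    calc N ^ (-(2 + 4 * δ)) * Real.exp (-(N - v 0)) ≤ N ^ (-(2 + 4 * δ)) * 1 := by gcongr
      _ ≤ N ^ ((-1 + δ) + (-1 + δ) + (-1 + δ)) := by
        rw [mul_one]
        exact Real.rpow_le_rpow_of_exponent_ge hN0 hN1.le (by linarith)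
      _ = N ^ (-1 + δ) * N ^ (-1 + δ) * N ^ (-1 + δ) := by
        rw [Real.rpow_add hN0, Real.rpow_add hN0]
      _ ≤ _ := by
        gcongr ?_ * ?_ * ?_
        · exact hmono 0
        · exact hmono 1
        · exact hmono 2

lemma numeric (ε d a b R : ℝ) (hd : 0 < d) (hdε : d ≤ ε) (ha : 0 < a) (hb : 0 < b)
    (hR : 0 ≤ R) (hRab : R ≤ a + b) :
    (R ^ (1.5:ℝ) + 1) * (min a b) ^ (2 + d) ≤ 5 * (a ^ 2 * (b ^ (1.5 + ε) + 1)) := by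
  have key : ∀ t : ℝ, 0 ≤ t → t ≤ 1.5 + ε → b ^ t ≤ b ^ (1.5 + ε) + 1 := by
    intro t ht ht2
    rcases le_total b 1 with h | h
    · have := Real.rpow_le_one hb.le h ht
      have : 0 ≤ b ^ (1.5 + ε) := by positivity
      linarith
    · have := Real.rpow_le_rpow_of_exponent_le h ht2
      linarith
  set D := b ^ (1.5 + ε) + 1 with hD
  have k1 : b ^ d ≤ D := key d hd.le (by linarith)
  have k2 : b ^ (1.5 + d) ≤ D := key _ (by linarith) (by linarith)
  have h4 : (2:ℝ) ^ (1.5:ℝ) ≤ 4 := by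
    calc (2:ℝ) ^ (1.5:ℝ) ≤ 2 ^ (2:ℝ) := Real.rpow_le_rpow_of_exponent_le (by norm_num) (by norm_num)
      _ = 4 := by norm_num
  have hM : ∀ M, 0 < M → R ≤ 2 * M → R ^ (1.5:ℝ) ≤ 4 * M ^ (1.5:ℝ) := by
    intro M hM h
    calc R ^ (1.5:ℝ) ≤ (2 * M) ^ (1.5:ℝ) := Real.rpow_le_rpow hR h (by norm_num)
      _ = 2 ^ (1.5:ℝ) * M ^ (1.5:ℝ) := Real.mul_rpow (by norm_num) hM.le
      _ ≤ _ := by gcongr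
  have ea : a ^ (2:ℕ) = a ^ (2:ℝ) := by norm_cast
  rcases le_total b a with h | h
  · rw [min_eq_right h]
    have r := hM a ha (by linarith)
    have h1 : R ^ (1.5:ℝ) * b ^ (2 + d) ≤ 4 * (a ^ 2 * D) := by
      calc R ^ (1.5:ℝ) * b ^ (2 + d) = R ^ (1.5:ℝ) * (b ^ (0.5:ℝ) * b ^ (1.5 + d)) := by
            rw [← Real.rpow_add hb]; congr 2; ring
        _ ≤ (4 * a ^ (1.5:ℝ)) * (a ^ (0.5:ℝ) * D) := by gcongr
        _ = 4 * (a ^ 2 * D) := by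
            rw [ea, show (2:ℝ) = 1.5 + 0.5 by norm_num, Real.rpow_add ha]; ring
    have h2 : b ^ (2 + d) ≤ a ^ 2 * D := by
      rw [ea, Real.rpow_add hb]; gcongr
    linarith
  · rw [min_eq_left h]
    have r := hM b hb (by linarith)
    have hda : a ^ d ≤ b ^ d := by gcongr
    have h1 : R ^ (1.5:ℝ) * a ^ (2 + d) ≤ 4 * (a ^ 2 * D) := by
      calc R ^ (1.5:ℝ) * a ^ (2 + d) ≤ (4 * b ^ (1.5:ℝ)) * (a ^ (2:ℝ) * b ^ d) := by
            rw [Real.rpow_add ha]; gcongr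
        _ = 4 * (a ^ 2 * b ^ (1.5 + d)) := by
            rw [ea, Real.rpow_add hb]; ring
        _ ≤ _ := by gcongr
    have h2 : a ^ (2 + d) ≤ a ^ 2 * D := by
      rw [ea, Real.rpow_add ha]; gcongr; exact hda.trans k1
    linarith

lemma basis_exists (x : EuclideanSpace ℝ (Fin 3)) :
    ∃ b : OrthonormalBasis (Fin 3) ℝ (EuclideanSpace ℝ (Fin 3)), b.repr x 0 = ‖x‖ := by
  by_cases hx : x = 0
  · exact ⟨EuclideanSpace.basisFun _ _, by simp [hx]⟩
  have hx' : ‖x‖ ≠ 0 := norm_ne_zero_iff.2 hx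
  have hon : Orthonormal ℝ (({0} : Set (Fin 3)).domRestrict (fun _ : Fin 3 => (‖x‖⁻¹ : ℝ) • x)) := by
    constructor
    · intro i; simp [Set.domRestrict, norm_smul, hx']
    · intro i j hij; exact absurd (Subsingleton.elim i j) hij
  obtain ⟨b, hb⟩ := hon.exists_orthonormalBasis_extension_of_card_eq (by simp)
  refine ⟨b, ?_⟩
  rw [b.repr_apply_apply, hb 0 rfl, real_inner_smul_left, real_inner_self_eq_norm_sq]
  field_simp

lemma G_facts (δ : ℝ) (hδ : 0 < δ)
    (b : OrthonormalBasis (Fin 3) ℝ (EuclideanSpace ℝ (Fin 3))) :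
    Integrable (fun y => ∏ i, phi δ (b.repr y i)) ∧
    ∫ y, ∏ i, phi δ (b.repr y i) = (∫ s, phi δ s) ^ 3 ∧
    ∀ᵐ y, ∀ i, b.repr y i ≠ 0 := by
  have mp : MeasurePreserving (fun y => WithLp.ofLp (b.repr y)) :=
    (PiLp.volume_preserving_ofLp (Fin 3)).comp b.measurePreserving_repr
  have hint : Integrable (fun v : Fin 3 → ℝ => ∏ i, phi δ (v i)) :=
    Integrable.fintype_prod (fun _ => phi_integrable δ hδ)
  refine ⟨mp.integrable_comp_of_integrable hint, ?_, ?_⟩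
  · have := integral_map mp.measurable.aemeasurable
      (f := fun v : Fin 3 → ℝ => ∏ i, phi δ (v i)) (by rw [mp.map_eq]; exact hint.1)
    rw [← this, mp.map_eq, integral_fintype_prod_volume_eq_prod]
    simp
  · rw [ae_all_iff]
    intro i
    have h : ∀ᵐ v : Fin 3 → ℝ, v i ≠ 0 := by
      have := Measure.pi_hyperplane (fun _ : Fin 3 => (volume : Measure ℝ)) i 0
      rw [ae_iff]; simpa [volume_pi] using this
    exact mp.quasiMeasurePreserving.ae h

theorem stmt13 (ε : ℝ) (hε : 0 < ε) :
    ∃ C > (0 : ℝ), ∀ x : EuclideanSpace ℝ (Fin 3),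
      (∫ y : EuclideanSpace ℝ (Fin 3),
          (Real.exp (-‖x - y‖) / ‖x - y‖ ^ 2) *
          (Real.exp (-‖y‖) / (‖y‖ ^ (1.5 + ε : ℝ) + 1))) ≤
        C * Real.exp (-‖x‖) / (‖x‖ ^ (1.5 : ℝ) + 1) := by
  obtain ⟨d, hd, hdε, hd2⟩ : ∃ d, 0 < d ∧ d ≤ ε ∧ d ≤ 1/2 :=
    ⟨min ε (1/2), by positivity, min_le_left _ _, min_le_right _ _⟩
  set K := (∫ s, phi (d/4) s) ^ 3 with hK
  have hK0 : 0 ≤ K := pow_nonneg (integral_nonneg fun s => phi_nonneg _ _) _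
  refine ⟨10 * K + 1, by positivity, fun x => ?_⟩
  obtain ⟨b, hb⟩ := basis_exists x
  obtain ⟨G1, G2, G3⟩ := G_facts (d/4) (by positivity) b
  set G : EuclideanSpace ℝ (Fin 3) → ℝ := fun y => ∏ i, phi (d/4) (b.repr y i) with hG
  have Gnn : ∀ y, 0 ≤ G y := fun y => Finset.prod_nonneg fun i _ => phi_nonneg _ _
  have G1' : Integrable (fun y => G (x - y)) := G1.comp_sub_left x
  have G2' : ∫ y, G (x - y) = K := by rw [integral_sub_left_eq_self G volume x]; exact G2
  have G3' : ∀ᵐ y, ∀ i, b.repr (x - y) i ≠ 0 :=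
    (Measure.measurePreserving_sub_left volume x).quasiMeasurePreserving.ae G3
  have hP : ∀ z : EuclideanSpace ℝ (Fin 3), (∀ i, b.repr z i ≠ 0) →
      ‖z‖ ^ (-(2 + d)) * Real.exp (-(‖z‖ - b.repr z 0)) ≤ G z := by
    intro z hz
    have := pointwise d hd hd2 (b.repr z) hz
    rwa [LinearIsometryEquiv.norm_map] at this
  set Q := ‖x‖ ^ (1.5 : ℝ) + 1 with hQ
  have hQ0 : 0 < Q := by positivity
  have main : (∫ y : EuclideanSpace ℝ (Fin 3),
          (Real.exp (-‖x - y‖) / ‖x - y‖ ^ 2) *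
          (Real.exp (-‖y‖) / (‖y‖ ^ (1.5 + ε : ℝ) + 1))) ≤
      ∫ y, (5 * Real.exp (-‖x‖) / Q) * (G y + G (x - y)) := by
    apply integral_mono_of_nonneg
    · exact Filter.Eventually.of_forall fun y => by simp only [Pi.zero_apply]; positivity
    · exact (G1.add G1').const_mul _
    · filter_upwards [G3, G3'] with y h1 h2
      have nz : ∀ z : EuclideanSpace ℝ (Fin 3), (∀ i, b.repr z i ≠ 0) → 0 < ‖z‖ := by
        intro z hz
        refine norm_pos_iff.2 fun h => hz 0 ?_
        simp [h]
      have hy := nz y h1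
      have hz := nz _ h2
      have le0 : ∀ z : EuclideanSpace ℝ (Fin 3), b.repr z 0 ≤ ‖z‖ := by
        intro z
        have := PiLp.norm_apply_le (b.repr z) 0
        rw [LinearIsometryEquiv.norm_map] at this
        exact (le_abs_self _).trans this
      have hsub : b.repr (x - y) 0 = ‖x‖ - b.repr y 0 := by
        rw [map_sub, PiLp.sub_apply, hb]
      have tri : ‖x‖ ≤ ‖x - y‖ + ‖y‖ := by simpa using norm_add_le (x - y) y
      have num := numeric ε d ‖x - y‖ ‖y‖ ‖x‖ hd hdε hz hy (norm_nonneg _) tri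
      have e1 := le0 y
      have e2 := le0 (x - y)
      have p1 := hP y h1
      have p2 := hP (x - y) h2
      have g1 := Gnn y
      have g2 := Gnn (x - y)
      have hD : 0 < ‖y‖ ^ (1.5 + ε : ℝ) + 1 := by positivity
      set D := ‖y‖ ^ (1.5 + ε : ℝ) + 1 with hDdef
      have hmin : 0 < min ‖x - y‖ ‖y‖ := lt_min hz hy
      have claim : (min ‖x - y‖ ‖y‖) ^ (-(2 + d)) * Real.exp (-(‖x - y‖ + ‖y‖ - ‖x‖)) ≤
          G y + G (x - y) := by
        rcases le_total ‖x - y‖ ‖y‖ with h | h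
        · rw [min_eq_left h]
          calc _ ≤ ‖x - y‖ ^ (-(2 + d)) * Real.exp (-(‖x - y‖ - b.repr (x - y) 0)) := by
                gcongr _ * Real.exp ?_; linarith
            _ ≤ _ := by linarith
        · rw [min_eq_right h]
          calc _ ≤ ‖y‖ ^ (-(2 + d)) * Real.exp (-(‖y‖ - b.repr y 0)) := by
                gcongr _ * Real.exp ?_; linarith
            _ ≤ _ := by linarith
      have hc : 1 / (‖x - y‖ ^ 2 * D) ≤ 5 / Q * (min ‖x - y‖ ‖y‖) ^ (-(2 + d)) := by
        rw [Real.rpow_neg hmin.le, div_mul_eq_mul_div, div_le_div_iff₀ (by positivity) hQ0,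
          ← div_eq_mul_inv, div_mul_eq_mul_div, le_div_iff₀ (by positivity), one_mul]
        exact num
      calc Real.exp (-‖x - y‖) / ‖x - y‖ ^ 2 * (Real.exp (-‖y‖) / D)
          = Real.exp (-‖x‖) * Real.exp (-(‖x - y‖ + ‖y‖ - ‖x‖)) * (1 / (‖x - y‖ ^ 2 * D)) := by
            have : Real.exp (-‖x‖) * Real.exp (-(‖x - y‖ + ‖y‖ - ‖x‖)) =
              Real.exp (-‖x - y‖) * Real.exp (-‖y‖) := by
              rw [← Real.exp_add, ← Real.exp_add]; congr 1; ring
            rw [this]; field_simp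
        _ ≤ Real.exp (-‖x‖) * Real.exp (-(‖x - y‖ + ‖y‖ - ‖x‖)) *
              (5 / Q * (min ‖x - y‖ ‖y‖) ^ (-(2 + d))) := by gcongr
        _ = (5 * Real.exp (-‖x‖) / Q) * ((min ‖x - y‖ ‖y‖) ^ (-(2 + d)) *
              Real.exp (-(‖x - y‖ + ‖y‖ - ‖x‖))) := by ring
        _ ≤ _ := by gcongr
  refine main.trans ?_
  rw [integral_const_mul, integral_add G1 G1', G2', G2, div_mul_eq_mul_div]
  gcongr ?_ / _
  nlinarith [Real.exp_pos (-‖x‖)]
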